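/- Let p be a prime and let Λ = U ⊕ U(p) ⊕ ⋯ ⊕ U(p) (one copy of U and g−1 copies of U(p), orthogonal direct sum). If v ∈ Λ is a primitive vector with div(v) = p, then v is Γ_Λ-equivalent to a vector lying in the sublattice U(p) ⊕ ⋯ ⊕ U(p). -/

import Mathlib

noncomputable section

open Submodule

variable {V : Type} [AddCommGroup V] [Module ℚ V]

/-- The dual lattice `Λ^∨ = {v ∈ Λ⊗ℚ : (v, Λ) ⊆ ℤ}` of a lattice `L` (inside the
ambient rational vector space `V = Λ⊗ℚ`) with respect to the form `B`. -/
def dualLattice (B : V →ₗ[ℚ] V →ₗ[ℚ] ℚ) (L : Submodule ℤ V) : Submodule ℤ V where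
  carrier := {v : V | ∀ x ∈ L, ∃ n : ℤ, B v x = (n : ℚ)}
  zero_mem' := fun x _ => ⟨0, by simp⟩
  add_mem' := by
    intro a b ha hb x hx
    obtain ⟨n, hn⟩ := ha x hx
    obtain ⟨m, hm⟩ := hb x hx
    exact ⟨n + m, by rw [map_add, LinearMap.add_apply, hn, hm]; push_cast; ring⟩
  smul_mem' := by
    intro c a ha x hx
    obtain ⟨n, hn⟩ := ha x hx
    refine ⟨c * n, ?_⟩
    have h1 : B (c • a) x = (B.flip x) (c • a) := rfl
    rw [h1, map_zsmul, LinearMap.flip_apply, hn, zsmul_eq_mul]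
    push_cast; ring

/-- A vector `v` is primitive in the lattice `L` if `ℚv ∩ L = ℤv`. -/
def IsPrimitive (L : Submodule ℤ V) (v : V) : Prop :=
  v ∈ L ∧ (Submodule.span ℚ {v}).restrictScalars ℤ ⊓ L = Submodule.span ℤ {v}

/-- `div(v) = d`, i.e. the ideal `(v, L) ⊆ ℤ` is generated by the positive integer `d`. -/
def HasDiv (B : V →ₗ[ℚ] V →ₗ[ℚ] ℚ) (L : Submodule ℤ V) (v : V) (d : ℕ) : Prop :=
  0 < d ∧ (∀ x ∈ L, ∃ n : ℤ, B v x = (n : ℚ) * (d : ℚ)) ∧ (∃ x ∈ L, B v x = (d : ℚ))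

/-- `v* = v / div(v)`. -/
def vstar (v : V) (d : ℕ) : V := ((d : ℚ))⁻¹ • v

lemma vstar_mem {B : V →ₗ[ℚ] V →ₗ[ℚ] ℚ} {L : Submodule ℤ V} {v : V} {d : ℕ}
    (h : HasDiv B L v d) : vstar v d ∈ dualLattice B L := by
  intro x hx
  obtain ⟨n, hn⟩ := h.2.1 x hx
  refine ⟨n, ?_⟩
  have hd : (d : ℚ) ≠ 0 := Nat.cast_ne_zero.mpr h.1.ne'
  show B (((d : ℚ))⁻¹ • v) x = (n : ℚ)
  rw [map_smul, LinearMap.smul_apply, hn, smul_eq_mul]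
  field_simp

/-- The discriminant group `D_Λ = Λ^∨ / Λ`. -/
abbrev DiscGroup (B : V →ₗ[ℚ] V →ₗ[ℚ] ℚ) (L : Submodule ℤ V) :=
  dualLattice B L ⧸ (L.comap (dualLattice B L).subtype)

/-- The class of an element of the dual lattice in the discriminant group. -/
def discCls (B : V →ₗ[ℚ] V →ₗ[ℚ] ℚ) (L : Submodule ℤ V) (v : dualLattice B L) :
    DiscGroup B L := Submodule.Quotient.mk v

/-- `γ` is an isometry of the lattice `L`, i.e. an element of `Sp(Λ)` (viewed as a
rational linear automorphism of the ambient space preserving `L` and the form). -/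
def IsIsometry (B : V →ₗ[ℚ] V →ₗ[ℚ] ℚ) (L : Submodule ℤ V) (γ : V ≃ₗ[ℚ] V) : Prop :=
  (∀ v, v ∈ L ↔ γ v ∈ L) ∧ ∀ v w, B (γ v) (γ w) = B v w

/-- `γ` lies in `Γ_Λ`: it is an isometry of `L` acting trivially on the discriminant
group, i.e. `γ(v) ≡ v mod Λ` for every `v ∈ Λ^∨`. -/
def InGamma (B : V →ₗ[ℚ] V →ₗ[ℚ] ℚ) (L : Submodule ℤ V) (γ : V ≃ₗ[ℚ] V) : Prop :=
  IsIsometry B L γ ∧ ∀ v ∈ dualLattice B L, γ v - v ∈ L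

lemma isometry_dual_mem {B : V →ₗ[ℚ] V →ₗ[ℚ] ℚ} {L : Submodule ℤ V} {γ : V ≃ₗ[ℚ] V}
    (h : IsIsometry B L γ) {u : V} (hu : u ∈ dualLattice B L) :
    γ u ∈ dualLattice B L := by
  intro x hx
  have hx' : γ.symm x ∈ L := by
    rw [h.1 (γ.symm x), LinearEquiv.apply_symm_apply]
    exact hx
  obtain ⟨n, hn⟩ := hu (γ.symm x) hx'
  refine ⟨n, ?_⟩
  have := h.2 u (γ.symm x)
  rw [LinearEquiv.apply_symm_apply] at this
  rw [this, hn]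

/-- The transvection `T_{l,m} : v ↦ v + (l,v)m + (m,v)l` on the rational vector space. -/
def transvection (B : V →ₗ[ℚ] V →ₗ[ℚ] ℚ) (l m : V) : V →ₗ[ℚ] V :=
  LinearMap.id + (B l).smulRight m + (B m).smulRight l

/-- An orthogonal decomposition `Λ = U ⊕ Λ'` with `U` a hyperbolic plane spanned by
`e, f` with `(e,f) = 1`. -/
def OrthoDecompU (B : V →ₗ[ℚ] V →ₗ[ℚ] ℚ) (L : Submodule ℤ V)
    (e f : V) (L' : Submodule ℤ V) : Prop :=
  e ∈ L ∧ f ∈ L ∧ L' ≤ L ∧ B e f = 1 ∧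
  (∀ z ∈ L', B e z = 0 ∧ B f z = 0) ∧
  Submodule.span ℤ {e, f} ⊔ L' = L

/-- An orthogonal decomposition `Λ = U₁ ⊕ U₂ ⊕ Λ''` with `U₁, U₂` hyperbolic planes. -/
def OrthoDecompUU (B : V →ₗ[ℚ] V →ₗ[ℚ] ℚ) (L : Submodule ℤ V)
    (e₁ f₁ e₂ f₂ : V) (L'' : Submodule ℤ V) : Prop :=
  e₁ ∈ L ∧ f₁ ∈ L ∧ e₂ ∈ L ∧ f₂ ∈ L ∧ L'' ≤ L ∧
  B e₁ f₁ = 1 ∧ B e₂ f₂ = 1 ∧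
  B e₁ e₂ = 0 ∧ B e₁ f₂ = 0 ∧ B f₁ e₂ = 0 ∧ B f₁ f₂ = 0 ∧
  (∀ z ∈ L'', B e₁ z = 0 ∧ B f₁ z = 0 ∧ B e₂ z = 0 ∧ B f₂ z = 0) ∧
  Submodule.span ℤ {e₁, f₁} ⊔ Submodule.span ℤ {e₂, f₂} ⊔ L'' = L

/-- An orthogonal decomposition `Λ = U ⊕ U(p) ⊕ ⋯ ⊕ U(p)`. -/
def OrthoDecompUUp (B : V →ₗ[ℚ] V →ₗ[ℚ] ℚ) (L : Submodule ℤ V) (p : ℕ)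
    (e f : V) {ι : Type} (E F : ι → V) : Prop :=
  e ∈ L ∧ f ∈ L ∧ (∀ i, E i ∈ L) ∧ (∀ i, F i ∈ L) ∧
  B e f = 1 ∧ (∀ i, B (E i) (F i) = (p : ℚ)) ∧
  (∀ i, B e (E i) = 0 ∧ B e (F i) = 0 ∧ B f (E i) = 0 ∧ B f (F i) = 0) ∧
  (∀ i j, i ≠ j → B (E i) (E j) = 0 ∧ B (E i) (F j) = 0 ∧ B (F i) (F j) = 0) ∧
  Submodule.span ℤ ({e, f} ∪ Set.range E ∪ Set.range F) = L

/-- An orthogonal decomposition `Λ = U(d₁) ⊕ ⋯ ⊕ U(d_g)`. -/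
def OrthoDecompType (B : V →ₗ[ℚ] V →ₗ[ℚ] ℚ) (L : Submodule ℤ V) {g : ℕ}
    (d : Fin g → ℕ) (E F : Fin g → V) : Prop :=
  (∀ i, E i ∈ L) ∧ (∀ i, F i ∈ L) ∧
  (∀ i, B (E i) (F i) = (d i : ℚ)) ∧
  (∀ i j, i ≠ j → B (E i) (E j) = 0 ∧ B (E i) (F j) = 0 ∧ B (F i) (F j) = 0) ∧
  Submodule.span ℤ (Set.range E ∪ Set.range F) = L

lemma coe_int_addCircle (n : ℤ) : (((n : ℚ) : AddCircle (1 : ℚ))) = 0 := by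
  have hmem : ((n : ℚ)) ∈ AddSubgroup.zmultiples (1 : ℚ) := ⟨n, by simp⟩
  exact (QuotientAddGroup.eq_zero_iff _).mpr hmem

lemma bilin_antisymm (B : V →ₗ[ℚ] V →ₗ[ℚ] ℚ) (halt : ∀ v, B v v = 0) (a b : V) :
    B a b = - B b a := by
  have h := halt (a + b)
  simp only [map_add, LinearMap.add_apply] at h
  rw [halt a, halt b] at h
  linarith

/-- The `ℚ/ℤ`-valued pairing on the dual lattice. -/
def rationalPairing (B : V →ₗ[ℚ] V →ₗ[ℚ] ℚ) (L : Submodule ℤ V) :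
    dualLattice B L →ₗ[ℤ] dualLattice B L →ₗ[ℤ] AddCircle (1 : ℚ) :=
  LinearMap.mk₂ ℤ (fun v w => ((B v.1 w.1 : ℚ) : AddCircle (1 : ℚ)))
    (fun v v' w => by
      beta_reduce
      rw [Submodule.coe_add, map_add, LinearMap.add_apply]
      exact QuotientAddGroup.mk_add (AddSubgroup.zmultiples (1 : ℚ)) _ _)
    (fun c v w => by
      beta_reduce
      have h1 : B ((c • v : dualLattice B L) : V) (w : V)
          = c • (B (v : V) (w : V)) := by
        have h2 : B ((c • v : dualLattice B L) : V) (w : V)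
            = (B.flip (w : V)) ((c • v : dualLattice B L) : V) := rfl
        rw [h2, Submodule.coe_smul, map_zsmul, LinearMap.flip_apply]
      rw [h1]
      exact QuotientAddGroup.mk_zsmul (AddSubgroup.zmultiples (1 : ℚ)) _ _
    )
    (fun v w w' => by
      beta_reduce
      rw [Submodule.coe_add, map_add]
      exact QuotientAddGroup.mk_add (AddSubgroup.zmultiples (1 : ℚ)) _ _)
    (fun c v w => by
      beta_reduce
      rw [Submodule.coe_smul, map_zsmul]
      exact QuotientAddGroup.mk_zsmul (AddSubgroup.zmultiples (1 : ℚ)) _ _)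

/-- The discriminant form on `D_Λ`, with values in `ℚ/ℤ`. -/
def discForm (B : V →ₗ[ℚ] V →ₗ[ℚ] ℚ) (L : Submodule ℤ V) (halt : ∀ v, B v v = 0) :
    DiscGroup B L →ₗ[ℤ] DiscGroup B L →ₗ[ℤ] AddCircle (1 : ℚ) :=
  (Submodule.liftQ _
    ((Submodule.liftQ _ (rationalPairing B L) (by
      intro v hv
      rw [LinearMap.mem_ker]
      refine LinearMap.ext fun w => ?_
      have hv' : (v : V) ∈ L := hv
      obtain ⟨n, hn⟩ := w.2 (v : V) hv'
      show ((B (v : V) (w : V) : ℚ) : AddCircle (1 : ℚ)) = 0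
      have h3 : B (v : V) (w : V) = ((-n : ℤ) : ℚ) := by
        rw [bilin_antisymm B halt, hn]; push_cast; ring
      rw [h3]
      exact coe_int_addCircle _)).flip) (by
      intro w hw
      rw [LinearMap.mem_ker]
      refine LinearMap.ext fun x => ?_
      obtain ⟨v, rfl⟩ := Submodule.Quotient.mk_surjective _ x
      have hw' : (w : V) ∈ L := hw
      obtain ⟨n, hn⟩ := v.2 (w : V) hw'
      show ((B (v : V) (w : V) : ℚ) : AddCircle (1 : ℚ)) = 0
      rw [hn]
      exact coe_int_addCircle _)).flip

/-- The orthogonal complement of a subgroup of the discriminant group with respect to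
the discriminant form. -/
def discOrth (B : V →ₗ[ℚ] V →ₗ[ℚ] ℚ) (L : Submodule ℤ V) (halt : ∀ v, B v v = 0)
    (D' : Submodule ℤ (DiscGroup B L)) : Submodule ℤ (DiscGroup B L) :=
  ⨅ y ∈ D', LinearMap.ker ((discForm B L halt).flip y)

/-- A splitting element of the discriminant group: `x` of order `d` lies in a subgroup
`D' ≅ (ℤ/d)²` with `D_Λ = D' ⊕ D'^⊥`. -/
def IsSplitElem (B : V →ₗ[ℚ] V →ₗ[ℚ] ℚ) (L : Submodule ℤ V) (halt : ∀ v, B v v = 0)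
    (x : DiscGroup B L) : Prop :=
  ∃ D' : Submodule ℤ (DiscGroup B L), x ∈ D' ∧
    Nonempty (D' ≃+ (ZMod (addOrderOf x) × ZMod (addOrderOf x))) ∧
    D' ⊔ discOrth B L halt D' = ⊤ ∧ D' ⊓ discOrth B L halt D' = ⊥

/-- The orthogonal complement `Λ₁^⊥ = {z ∈ Λ : (z, Λ₁) = 0}` of a sublattice inside `L`. -/
def orthCompIn (B : V →ₗ[ℚ] V →ₗ[ℚ] ℚ) (L L₁ : Submodule ℤ V) : Submodule ℤ V where
  carrier := {z | z ∈ L ∧ ∀ y ∈ L₁, B z y = 0}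
  zero_mem' := ⟨L.zero_mem, fun y _ => by simp⟩
  add_mem' := by
    intro a b ha hb
    refine ⟨L.add_mem ha.1 hb.1, fun y hy => ?_⟩
    rw [map_add, LinearMap.add_apply, ha.2 y hy, hb.2 y hy, add_zero]
  smul_mem' := by
    intro c a ha
    refine ⟨L.smul_mem c ha.1, fun y hy => ?_⟩
    have h1 : B (c • a) y = (B.flip y) (c • a) := rfl
    rw [h1, map_zsmul, LinearMap.flip_apply, ha.2 y hy, smul_zero]

/-- A splitting (primitive) vector: `v` lies in a rank 2 sublattice `Λ₁` with
`Λ = Λ₁ ⊕ Λ₁^⊥` (orthogonal direct sum). -/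
def IsSplitVec (B : V →ₗ[ℚ] V →ₗ[ℚ] ℚ) (L : Submodule ℤ V) (v : V) : Prop :=
  ∃ L₁ : Submodule ℤ V, v ∈ L₁ ∧ L₁ ≤ L ∧ Module.finrank ℤ L₁ = 2 ∧
    L₁ ⊔ orthCompIn B L L₁ = L ∧ L₁ ⊓ orthCompIn B L L₁ = ⊥

end

/-!
Write `U = ⟨e, f⟩` and `N = U(p) ⊕ ⋯ ⊕ U(p)`. Eichler transvections along `e` and `f` lie in `Γ_Λ`;
they run the Euclidean algorithm on the `U`-component of `v` and bring `v` to the form `p f + w`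
with `w ∈ N`. Since `N` is a unimodular lattice scaled by `p`, `w = c g` for some `g ∈ N` admitting
`k ∈ N` with `(k, g) = p`, and primitivity of `p f + c g` forces `gcd(c, p) = 1`. A transvection
along `e` replaces `c g` by `c g + p k`, a vector that some element of `N` pairs to `p` by Bézout,
so that one more transvection, along `f`, removes `p f`.
-/

section

open Submodule

variable {V : Type} [AddCommGroup V] [Module ℚ V] {B : V →ₗ[ℚ] V →ₗ[ℚ] ℚ} {L : Submodule ℤ V}

/-- The Eichler transvection `x ↦ x + (l,x)m + (m,x)l + c(l,x)l`. It preserves the form when `l` is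
isotropic and orthogonal to `m`; for `m = 0` it is the symplectic transvection along `l`. -/
def eichlerTransvection (B : V →ₗ[ℚ] V →ₗ[ℚ] ℚ) (l m : V) (c : ℤ) : V →ₗ[ℚ] V :=
  transvection B l m + c • (B l).smulRight l

lemma eichlerTransvection_apply (l m : V) (c : ℤ) (x : V) :
    eichlerTransvection B l m c x = x + B l x • m + (B m x + c * B l x) • l := by
  simp only [eichlerTransvection, transvection, LinearMap.add_apply, LinearMap.id_apply,
    LinearMap.smulRight_apply, LinearMap.smul_apply]
  module

lemma eichlerTransvection_neg_apply_self (halt : ∀ v, B v v = 0) {l m : V} (hlm : B l m = 0)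
    (c : ℤ) (x : V) :
    eichlerTransvection B l (-m) (-c) (eichlerTransvection B l m c x) = x := by
  have hml : B m l = 0 := by rw [bilin_antisymm B halt, hlm, neg_zero]
  simp only [eichlerTransvection_apply, map_add, map_smul, map_neg, LinearMap.neg_apply, halt,
    hlm, hml]
  push_cast
  module

lemma bilin_eichlerTransvection (halt : ∀ v, B v v = 0) {l m : V} (hlm : B l m = 0) (c : ℤ)
    (x y : V) :
    B (eichlerTransvection B l m c x) (eichlerTransvection B l m c y) = B x y := by
  have hml : B m l = 0 := by rw [bilin_antisymm B halt, hlm, neg_zero]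
  simp only [eichlerTransvection_apply, map_add, map_smul, LinearMap.add_apply,
    LinearMap.smul_apply, halt, hlm, hml, smul_eq_mul, bilin_antisymm B halt x l,
    bilin_antisymm B halt x m]
  ring

lemma eichlerTransvection_sub_self_mem (halt : ∀ v, B v v = 0) {l m : V} (hl : l ∈ L) (hm : m ∈ L)
    (c : ℤ) {x : V} (hx : x ∈ dualLattice B L) : eichlerTransvection B l m c x - x ∈ L := by
  obtain ⟨a, ha⟩ := hx l hl
  obtain ⟨b, hb⟩ := hx m hm
  have key : eichlerTransvection B l m c x - x = (-a) • m + (-b - c * a) • l := by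
    rw [eichlerTransvection_apply, bilin_antisymm B halt l, bilin_antisymm B halt m, ha, hb]
    module
  rw [key]
  exact L.add_mem (L.smul_mem _ hm) (L.smul_mem _ hl)

/-- The Eichler transvection along `l` and `m ⟂ l` as an automorphism of `V`. -/
def eichlerEquiv (halt : ∀ v, B v v = 0) {l m : V} (hlm : B l m = 0) (c : ℤ) : V ≃ₗ[ℚ] V :=
  LinearEquiv.ofLinearMap (eichlerTransvection B l m c) (eichlerTransvection B l (-m) (-c))
    (LinearMap.ext fun x => by
      simpa using eichlerTransvection_neg_apply_self halt (m := -m) (by simp [hlm]) (-c) x)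
    (LinearMap.ext (eichlerTransvection_neg_apply_self halt hlm c))

lemma inGamma_eichlerEquiv (halt : ∀ v, B v v = 0) (hL : L ≤ dualLattice B L) {l m : V}
    (hl : l ∈ L) (hm : m ∈ L) (hlm : B l m = 0) (c : ℤ) :
    InGamma B L (eichlerEquiv halt hlm c) := by
  refine ⟨⟨fun x => ⟨fun hx => ?_, fun hx => ?_⟩, bilin_eichlerTransvection halt hlm c⟩,
    fun x hx => eichlerTransvection_sub_self_mem halt hl hm c hx⟩
  · exact (L.sub_mem_iff_left hx).1 (eichlerTransvection_sub_self_mem halt hl hm c (hL hx))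
  · rw [← (eichlerEquiv halt hlm c).symm_apply_apply x]
    exact (L.sub_mem_iff_left hx).1
      (eichlerTransvection_sub_self_mem halt hl (L.neg_mem hm) (-c) (hL hx))

lemma HasDiv.ne_zero {v : V} {d : ℕ} (hv : HasDiv B L v d) : v ≠ 0 := by
  rintro rfl
  obtain ⟨hd, -, x, -, hx⟩ := hv
  rw [map_zero, LinearMap.zero_apply] at hx
  exact hd.ne (mod_cast hx)

lemma IsPrimitive.isUnit {x : V} {n : ℤ} (h : IsPrimitive L (n • x)) (hne : n • x ≠ 0)
    (hx : x ∈ L) : IsUnit n := by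
  have hmem : x ∈ span ℤ {n • x} := by
    rw [← h.2]
    refine ⟨mem_span_singleton.2 ⟨(n : ℚ)⁻¹, ?_⟩, hx⟩
    rw [← Int.cast_smul_eq_zsmul ℚ, inv_smul_smul₀]
    exact_mod_cast left_ne_zero_of_smul hne
  obtain ⟨k, hk⟩ := mem_span_singleton.1 hmem
  have hkn : ((k * n : ℤ) : ℚ) • x = (1 : ℚ) • x := by
    rw [Int.cast_smul_eq_zsmul, mul_smul, hk, one_smul]
  exact .of_mul_eq_one_right k
    (by exact_mod_cast smul_left_injective ℚ (right_ne_zero_of_smul hne) hkn)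

lemma IsPrimitive.isCoprime {x y : V} {c d : ℤ} (h : IsPrimitive L (c • x + d • y))
    (hne : c • x + d • y ≠ 0) (hx : x ∈ L) (hy : y ∈ L) : IsCoprime c d := by
  rw [← isRelPrime_iff_isCoprime]
  rintro n ⟨c', rfl⟩ ⟨d', rfl⟩
  have hn : (n * c') • x + (n * d') • y = n • (c' • x + d' • y) := by
    rw [smul_add, mul_smul, mul_smul]
  rw [hn] at h hne
  exact h.isUnit hne (L.add_mem (L.smul_mem c' hx) (L.smul_mem d' hy))

/-- `Γ_Λ`-equivalence of vectors: `w` lies in the `Γ_Λ`-orbit of `v`. -/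
def GammaEquivalent (B : V →ₗ[ℚ] V →ₗ[ℚ] ℚ) (L : Submodule ℤ V) (v w : V) : Prop :=
  ∃ γ : V ≃ₗ[ℚ] V, InGamma B L γ ∧ γ v = w

namespace GammaEquivalent

lemma refl (B : V →ₗ[ℚ] V →ₗ[ℚ] ℚ) (L : Submodule ℤ V) (v : V) : GammaEquivalent B L v v :=
  ⟨.refl ℚ V, ⟨⟨fun _ => Iff.rfl, fun _ _ => rfl⟩, fun _ _ => by simp⟩, rfl⟩

lemma trans {u v w : V} (huv : GammaEquivalent B L u v) (hvw : GammaEquivalent B L v w) :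
    GammaEquivalent B L u w := by
  obtain ⟨γ, hγ, rfl⟩ := huv
  obtain ⟨δ, hδ, rfl⟩ := hvw
  refine ⟨γ.trans δ, ⟨⟨fun x => (hγ.1.1 x).trans (hδ.1.1 _), fun x y => ?_⟩, fun x hx => ?_⟩, rfl⟩
  · exact (hδ.1.2 _ _).trans (hγ.1.2 x y)
  · simpa using L.add_mem (hδ.2 _ (isometry_dual_mem hγ.1 hx)) (hγ.2 x hx)

instance : Trans (GammaEquivalent B L) (GammaEquivalent B L) (GammaEquivalent B L) := ⟨trans⟩

lemma hasDiv {v w : V} {d : ℕ} (h : GammaEquivalent B L v w) (hv : HasDiv B L v d) :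
    HasDiv B L w d := by
  obtain ⟨γ, ⟨⟨hγL, hγB⟩, -⟩, rfl⟩ := h
  obtain ⟨hd, hdvd, x, hx, hvx⟩ := hv
  refine ⟨hd, fun y hy => ?_, γ x, (hγL x).1 hx, (hγB v x).trans hvx⟩
  obtain ⟨n, hn⟩ := hdvd (γ.symm y) ((hγL _).2 (by simpa using hy))
  exact ⟨n, by rw [← hn, ← hγB v, γ.apply_symm_apply]⟩

lemma isPrimitive {v w : V} (h : GammaEquivalent B L v w) (hv : IsPrimitive L v) :
    IsPrimitive L w := by
  obtain ⟨γ, ⟨⟨hγL, -⟩, -⟩, rfl⟩ := h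
  have hγv : γ v ∈ L := (hγL v).1 hv.1
  refine ⟨hγv, le_antisymm ?_ (span_le.2 ?_)⟩
  · rintro y ⟨hy, hyL⟩
    obtain ⟨q, rfl⟩ := mem_span_singleton.1 hy
    have hqv : q • v ∈ span ℤ {v} := by
      rw [← hv.2]
      exact ⟨smul_mem _ q (mem_span_singleton_self v), (hγL _).2 (by rwa [map_smul])⟩
    obtain ⟨n, hn⟩ := mem_span_singleton.1 hqv
    exact mem_span_singleton.2 ⟨n, by rw [← map_zsmul γ, hn, map_smul]⟩
  · rintro _ rfl
    exact ⟨mem_span_singleton_self _, hγv⟩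

end GammaEquivalent

namespace OrthoDecompU

variable {N : Submodule ℤ V} {e f m w : V}

lemma exists_eq (hU : OrthoDecompU B L e f N) {v : V} (hv : v ∈ L) :
    ∃ a b : ℤ, ∃ w ∈ N, v = a • e + b • f + w := by
  rw [← hU.2.2.2.2.2] at hv
  obtain ⟨y, hy, w, hw, rfl⟩ := mem_sup.1 hv
  obtain ⟨a, b, rfl⟩ := mem_span_pair.1 hy
  exact ⟨a, b, w, hw, rfl⟩

lemma bilin_left (halt : ∀ v, B v v = 0) (hU : OrthoDecompU B L e f N) (hw : w ∈ N) (a b : ℤ) :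
    B e (a • e + b • f + w) = b := by
  simp [halt, hU.2.2.2.1, (hU.2.2.2.2.1 w hw).1, map_zsmul]

lemma bilin_right (halt : ∀ v, B v v = 0) (hU : OrthoDecompU B L e f N) (hw : w ∈ N) (a b : ℤ) :
    B f (a • e + b • f + w) = -a := by
  simp [halt, bilin_antisymm B halt f e, hU.2.2.2.1, (hU.2.2.2.2.1 w hw).2]

lemma bilin_orth (halt : ∀ v, B v v = 0) (hU : OrthoDecompU B L e f N) (hm : m ∈ N) (a b : ℤ) :
    B m (a • e + b • f + w) = B m w := by
  obtain ⟨hme, hmf⟩ := hU.2.2.2.2.1 m hm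
  simp [bilin_antisymm B halt m e, bilin_antisymm B halt m f, hme, hmf]

lemma gammaEquivalent_left (halt : ∀ v, B v v = 0) (hL : L ≤ dualLattice B L)
    (hU : OrthoDecompU B L e f N) (hm : m ∈ N) (hw : w ∈ N) {a a' b k : ℤ}
    (ha' : (a' : ℚ) = a + B m w + k * b) :
    GammaEquivalent B L (a • e + b • f + w) (a' • e + b • f + (w + b • m)) := by
  refine ⟨eichlerEquiv halt (hU.2.2.2.2.1 m hm).1 k, inGamma_eichlerEquiv halt hL hU.1
    (hU.2.2.1 hm) _ k, ?_⟩
  have hmw : B m w = a' - a - k * b := by rw [ha']; ring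
  change eichlerTransvection B e m k _ = _
  rw [eichlerTransvection_apply, hU.bilin_left halt hw, hU.bilin_orth halt hm, hmw]
  module

lemma gammaEquivalent_right (halt : ∀ v, B v v = 0) (hL : L ≤ dualLattice B L)
    (hU : OrthoDecompU B L e f N) (hm : m ∈ N) (hw : w ∈ N) {a b b' k : ℤ}
    (hb' : (b' : ℚ) = b - B m w + k * a) :
    GammaEquivalent B L (a • e + b • f + w) (a • e + b' • f + (w + a • m)) := by
  have hfm : B f (-m) = 0 := by rw [map_neg, (hU.2.2.2.2.1 m hm).2, neg_zero]
  refine ⟨eichlerEquiv halt hfm (-k), inGamma_eichlerEquiv halt hL hU.2.1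
    (L.neg_mem (hU.2.2.1 hm)) _ _, ?_⟩
  have hmw : B m w = b - b' + k * a := by rw [hb']; ring
  change eichlerTransvection B f (-m) (-k) _ = _
  rw [eichlerTransvection_apply, hU.bilin_right halt hw, map_neg, LinearMap.neg_apply,
    hU.bilin_orth halt hm, hmw]
  module

/- The Euclidean algorithm: one transvection along `e` followed by one along `f` replaces `b` by
`-(a % b)`. -/
lemma exists_gammaEquivalent_zsmul_left_add (halt : ∀ v, B v v = 0) (hL : L ≤ dualLattice B L)
    (hU : OrthoDecompU B L e f N) (hw : w ∈ N) (a b : ℤ) :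
    ∃ d : ℤ, GammaEquivalent B L (a • e + b • f + w) (d • e + (0 : ℤ) • f + w) := by
  induction hn : b.natAbs using Nat.strong_induction_on generalizing a b with
  | _ n ih =>
    subst hn
    obtain rfl | hb := eq_or_ne b 0
    · exact ⟨a, .refl B L _⟩
    have hlt : (-(a % b)).natAbs < b.natAbs := by
      have := Int.emod_nonneg a hb
      have := Int.emod_lt a hb
      omega
    obtain ⟨d, hd⟩ := ih _ hlt (b + a % b) (-(a % b)) rfl
    have hab : (a : ℚ) = b * (a / b : ℤ) + (a % b : ℤ) := by
      exact_mod_cast (Int.mul_ediv_add_emod a b).symm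
    refine ⟨d, ?_⟩
    calc GammaEquivalent B L (a • e + b • f + w) ((b + a % b) • e + b • f + w) := by
          simpa using hU.gammaEquivalent_left halt hL N.zero_mem hw (k := 1 - a / b)
            (a' := b + a % b) (a := a) (b := b) (by
              simp only [map_zero, LinearMap.zero_apply]; push_cast; linear_combination -hab)
      GammaEquivalent B L _ ((b + a % b) • e + (-(a % b)) • f + w) := by
          simpa using hU.gammaEquivalent_right halt hL N.zero_mem hw (k := -1)
            (b' := -(a % b)) (a := b + a % b) (b := b) (by simp)
      GammaEquivalent B L _ (d • e + (0 : ℤ) • f + w) := hd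

/- If `(z, v) = d` with `z = α e + β f + m`, then after the Euclidean algorithm the transvection
along `f` and `m` produces the coefficient `d` at `f`, which divides the coefficient at `e`. -/
lemma exists_gammaEquivalent_zsmul_add (halt : ∀ v, B v v = 0) (hL : L ≤ dualLattice B L)
    (hU : OrthoDecompU B L e f N) {v : V} (hv : v ∈ L) {d : ℕ} (hdiv : HasDiv B L v d) :
    ∃ w ∈ N, GammaEquivalent B L v ((d : ℤ) • f + w) := by
  obtain ⟨a, b, w, hw, rfl⟩ := hU.exists_eq hv
  obtain ⟨a', hred⟩ := hU.exists_gammaEquivalent_zsmul_left_add halt hL hw a b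
  obtain ⟨-, hdvd, z, hz, hvz⟩ := hred.hasDiv hdiv
  obtain ⟨n, hn⟩ := hdvd f hU.2.1
  have ha' : (a' : ℚ) = n * d := by
    rw [← hn, bilin_antisymm B halt, hU.bilin_right halt hw, neg_neg]
  replace hvz : a' * B e z + B w z = d := by simpa using hvz
  obtain ⟨α, β, m, hm, rfl⟩ := hU.exists_eq hz
  rw [hU.bilin_left halt hm, hU.bilin_orth halt hw, bilin_antisymm B halt w] at hvz
  refine ⟨w + a' • m, N.add_mem hw (N.smul_mem a' hm), ?_⟩
  calc GammaEquivalent B L _ (a' • e + (0 : ℤ) • f + w) := hred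
    GammaEquivalent B L _ (a' • e + (d : ℤ) • f + (w + a' • m)) :=
        hU.gammaEquivalent_right halt hL hm hw (k := β) (by push_cast; linear_combination -hvz)
    GammaEquivalent B L _ ((d : ℤ) • f + (w + a' • m)) := by
        simpa using hU.gammaEquivalent_left halt hL N.zero_mem
          (N.add_mem hw (N.smul_mem a' hm)) (k := -n) (a' := 0) (a := a') (b := d)
          (by simp [ha'])

lemma gammaEquivalent_of_isCoprime (halt : ∀ v, B v v = 0) (hL : L ≤ dualLattice B L)
    (hU : OrthoDecompU B L e f N) {g h : V} (hg : g ∈ N) (hh : h ∈ N) {c d : ℤ}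
    (hhg : B h g = d) (hcd : IsCoprime c d) :
    GammaEquivalent B L (d • f + c • g) (c • g + d • h) := by
  obtain ⟨s, t, hst⟩ := hcd
  have hst' : (s * c + t * d : ℚ) = 1 := by exact_mod_cast hst
  have hw : c • g + d • h ∈ N := N.add_mem (N.smul_mem c hg) (N.smul_mem d hh)
  have hm : s • h - t • g ∈ N := N.sub_mem (N.smul_mem s hh) (N.smul_mem t hg)
  have hmw : B (s • h - t • g) (c • g + d • h) = d := by
    simp only [map_sub, map_add, map_zsmul, LinearMap.sub_apply, LinearMap.smul_apply, halt, hhg,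
      bilin_antisymm B halt g h, zsmul_eq_mul]
    linear_combination (d : ℚ) * hst'
  calc GammaEquivalent B L (d • f + c • g) (d • f + (c • g + d • h)) := by
        simpa using hU.gammaEquivalent_left halt hL hh (N.smul_mem c hg) (a := 0) (a' := 0)
          (b := d) (k := -c) (by simp [hhg])
    GammaEquivalent B L _ (c • g + d • h) := by
        simpa using hU.gammaEquivalent_right halt hL hm hw (a := 0) (b := d) (b' := 0) (k := 0)
          (by rw [hmw]; simp)

end OrthoDecompU

lemma exists_eq_zsmul_of_mem_span_range {κ : Type*} [Nonempty κ] {b b' : κ → V} {q : ℚ}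
    (hdiag : ∀ i, B (b' i) (b i) = q) (hoff : ∀ i j, i ≠ j → B (b' i) (b j) = 0) {w : V}
    (hw : w ∈ span ℤ (Set.range b)) :
    ∃ c : ℤ, ∃ g ∈ span ℤ (Set.range b), ∃ h ∈ span ℤ (Set.range b'),
      w = c • g ∧ B h g = q := by
  classical
  -- `g` is `w` divided by the gcd of its coordinates; Bézout coefficients of `g` give `h`.
  obtain ⟨x, rfl⟩ := Finsupp.mem_span_range_iff_exists_finsupp.1 hw
  set s : Finset κ := insert (Classical.arbitrary κ) x.support
  obtain ⟨y, hxy, hy⟩ := s.extract_gcd x (Finset.insert_nonempty _ _)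
  obtain ⟨z, hz⟩ := s.gcd_eq_sum_mul y
  refine ⟨s.gcd x, ∑ i ∈ s, y i • b i, sum_mem fun i _ => smul_mem _ _ (subset_span ⟨i, rfl⟩),
    ∑ i ∈ s, z i • b' i, sum_mem fun i _ => smul_mem _ _ (subset_span ⟨i, rfl⟩), ?_, ?_⟩
  · rw [Finsupp.sum_of_support_subset x (Finset.subset_insert _ _) _ (by simp), Finset.smul_sum]
    exact Finset.sum_congr rfl fun i hi => by rw [smul_smul, ← hxy i hi]
  · have hrow : ∀ i ∈ s, B (b' i) (∑ j ∈ s, y j • b j) = y i * q := fun i hi => by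
      rw [map_sum, Finset.sum_eq_single_of_mem i hi fun j _ hji => ?_]
      · simp [hdiag]
      · simp [hoff i j hji.symm]
    have hyz : ∑ i ∈ s, (y i * z i : ℚ) = 1 := by exact_mod_cast (hz.symm.trans hy)
    calc B (∑ i ∈ s, z i • b' i) (∑ j ∈ s, y j • b j)
        = ∑ i ∈ s, (y i * z i : ℚ) * q := by
          rw [map_sum B, LinearMap.sum_apply]
          refine Finset.sum_congr rfl fun i hi => ?_
          simp only [map_zsmul, LinearMap.smul_apply, hrow i hi, zsmul_eq_mul]
          ring
      _ = q := by rw [← Finset.sum_mul, hyz, one_mul]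

namespace OrthoDecompUUp

variable {ι : Type} {E F : ι → V} {e f : V} {p : ℕ}

lemma orthoDecompU (h : OrthoDecompUUp B L p e f E F) :
    OrthoDecompU B L e f (span ℤ (Set.range E ∪ Set.range F)) := by
  obtain ⟨he, hf, hE, hF, hef, -, horth, -, hL⟩ := h
  refine ⟨he, hf, span_le.2 ?_, hef, fun z hz => ?_, ?_⟩
  · rintro _ (⟨i, rfl⟩ | ⟨i, rfl⟩)
    exacts [hE i, hF i]
  · induction hz using span_induction with
    | mem x hx =>
      obtain ⟨i, rfl⟩ | ⟨i, rfl⟩ := hx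
      exacts [⟨(horth i).1, (horth i).2.2.1⟩, ⟨(horth i).2.1, (horth i).2.2.2⟩]
    | zero => simp
    | add x y _ _ hx hy => simp [hx, hy]
    | smul n x _ hx => simp [hx]
  · rw [← span_union, ← Set.union_assoc, hL]

lemma exists_eq_zsmul (halt : ∀ v, B v v = 0) (h : OrthoDecompUUp B L p e f E F) [Nonempty ι]
    {w : V} (hw : w ∈ span ℤ (Set.range E ∪ Set.range F)) :
    ∃ c : ℤ, ∃ g ∈ span ℤ (Set.range E ∪ Set.range F),
      ∃ k ∈ span ℤ (Set.range E ∪ Set.range F), w = c • g ∧ B k g = p := by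
  obtain ⟨-, -, -, -, -, hEF, -, horth, -⟩ := h
  have hFE (i j : ι) : B (-F i) (E j) = B (E j) (F i) := by
    rw [bilin_antisymm B halt, map_neg, neg_neg]
  have hEE (i j : ι) : B (E i) (E j) = 0 := by
    obtain rfl | hij := eq_or_ne i j
    exacts [halt _, (horth i j hij).1]
  have hFF (i j : ι) : B (F i) (F j) = 0 := by
    obtain rfl | hij := eq_or_ne i j
    exacts [halt _, (horth i j hij).2.2]
  have hdiag : ∀ i, B (Sum.elim (-F) E i) (Sum.elim E F i) = p := by
    rintro (i | i)
    · exact (hFE i i).trans (hEF i)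
    · exact hEF i
  have hoff : ∀ i j, i ≠ j → B (Sum.elim (-F) E i) (Sum.elim E F j) = 0 := by
    rintro (i | i) (j | j) hij
    · exact (hFE i j).trans (horth j i (ne_of_apply_ne Sum.inl hij.symm)).2.1
    · simpa using hFF i j
    · exact hEE i j
    · exact (horth i j (ne_of_apply_ne Sum.inr hij)).2.1
  have hdual : span ℤ (Set.range (Sum.elim (-F) E)) ≤ span ℤ (Set.range E ∪ Set.range F) := by
    rw [span_le]
    rintro _ ⟨i | i, rfl⟩
    · exact neg_mem (subset_span (.inr ⟨i, rfl⟩))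
    · exact subset_span (.inl ⟨i, rfl⟩)
  rw [← Set.Sum.elim_range] at hw
  obtain ⟨c, g, hg, k, hk, hwg, hkg⟩ := exists_eq_zsmul_of_mem_span_range hdiag hoff hw
  exact ⟨c, g, by rwa [← Set.Sum.elim_range], k, hdual hk, hwg, hkg⟩

lemma eq_one_of_isEmpty (halt : ∀ v, B v v = 0) (hL : L ≤ dualLattice B L)
    (h : OrthoDecompUUp B L p e f E F) [IsEmpty ι] {v : V} (hv : IsPrimitive L v)
    (hdiv : HasDiv B L v p) : p = 1 := by
  obtain ⟨w, hw, hvw⟩ := h.orthoDecompU.exists_gammaEquivalent_zsmul_add halt hL hv.1 hdiv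
  obtain rfl : w = 0 := by simpa [Set.range_eq_empty] using hw
  rw [add_zero] at hvw
  exact Nat.isUnit_iff.1 (Int.ofNat_isUnit.1
    ((hvw.isPrimitive hv).isUnit (hvw.hasDiv hdiv).ne_zero h.2.1))

end OrthoDecompUUp

theorem long_vector_into_Up_part_general (halt : ∀ v, B v v = 0)
    (hint : ∀ x ∈ L, ∀ y ∈ L, ∃ n : ℤ, B x y = (n : ℚ)) {p : ℕ} {ι : Type}
    (hp : p = 1 → Nonempty ι) {e f : V} {E F : ι → V} (hdec : OrthoDecompUUp B L p e f E F)
    {v : V} (hv : IsPrimitive L v) (hdiv : HasDiv B L v p) :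
    ∃ γ : V ≃ₗ[ℚ] V, InGamma B L γ ∧ γ v ∈ span ℤ (Set.range E ∪ Set.range F) := by
  have hU := hdec.orthoDecompU
  obtain ⟨w, hw, hvw⟩ := hU.exists_gammaEquivalent_zsmul_add halt hint hv.1 hdiv
  have hprim := hvw.isPrimitive hv
  have hne := (hvw.hasDiv hdiv).ne_zero
  have hι : Nonempty ι := by
    by_contra! hι
    exact not_nonempty_iff.2 hι (hp (hdec.eq_one_of_isEmpty halt hint hv hdiv))
  obtain ⟨c, g, hg, k, hk, rfl, hkg⟩ := hdec.exists_eq_zsmul halt hw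
  have hpc : IsCoprime c p := (hprim.isCoprime hne hU.2.1 (hU.2.2.1 hg)).symm
  obtain ⟨γ, hγ, hγv⟩ := hvw.trans (hU.gammaEquivalent_of_isCoprime halt hint hg hk hkg hpc)
  exact ⟨γ, hγ, hγv ▸ add_mem (smul_mem _ c hg) (smul_mem _ _ hk)⟩

end

/-- For `Λ = U ⊕ U(p) ⊕ ⋯ ⊕ U(p)` with `p` prime, a primitive vector with
`div(v) = p` is `Γ_Λ`-equivalent to a vector of the sublattice `U(p) ⊕ ⋯ ⊕ U(p)`. -/
theorem long_vector_into_Up_part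
    (V : Type) [AddCommGroup V] [Module ℚ V]
    (B : V →ₗ[ℚ] V →ₗ[ℚ] ℚ)
    (halt : ∀ v, B v v = 0)
    (hnd : ∀ v : V, (∀ w, B v w = 0) → v = 0)
    (L : Submodule ℤ V) (hfg : L.FG)
    (hspan : Submodule.span ℚ (L : Set V) = ⊤)
    (hint : ∀ x ∈ L, ∀ y ∈ L, ∃ n : ℤ, B x y = (n : ℚ))
    (p : ℕ) (hp : p.Prime) (ι : Type) [Fintype ι]
    (e f : V) (E F : ι → V)
    (hdec : OrthoDecompUUp B L p e f E F)
    (v : V) (hv : IsPrimitive L v) (hdiv : HasDiv B L v p) :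
    ∃ γ : V ≃ₗ[ℚ] V, InGamma B L γ ∧
      γ v ∈ Submodule.span ℤ (Set.range E ∪ Set.range F) := by
  exact long_vector_into_Up_part_general halt hint (fun h => absurd h hp.ne_one) hdec hv hdiv
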